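/- Let g and ḡ be geodesically equivalent pseudo-Riemannian metrics on M, L = L(g,ḡ), and χ = χ1·χ2 an admissible factorisation of the characteristic polynomial of L, with deg χ1 = r. Let (x¹,…,x^r, y^{r+1},…,y^n) be local coordinates such that the distribution D1 = ker χ1(L) is spanned by ∂_{x^1},…,∂_{x^r} and D2 = ker χ2(L) is spanned by ∂_{y^{r+1}},…,∂_{y^n}. Then in these coordinates the matrix of L is block-diagonal, L = diag(L1, L2), where the entries of the r×r block L1 depend only on the x-variables and the entries of the (n−r)×(n−r) block L2 depend only on the y-variables. -/

import Mathlib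

open Matrix Polynomial Filter

noncomputable section

variable {ι : Type} [Fintype ι] [DecidableEq ι]

/-- Partial derivative of a real-valued function on `ι → ℝ` in the direction of the
`j`-th coordinate vector. -/
def pd (j : ι) (F : (ι → ℝ) → ℝ) (x : ι → ℝ) : ℝ :=
  fderiv ℝ F x (Pi.single j 1)

/-- Christoffel symbols `Γ^i_{jk}` of a metric given in local coordinates as a
matrix-valued function. -/
def christoffel (g : (ι → ℝ) → Matrix ι ι ℝ) (x : ι → ℝ) (i j k : ι) : ℝ :=
  (1 / 2) * ∑ m, (g x)⁻¹ i m *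
    (pd j (fun y => g y m k) x + pd k (fun y => g y m j) x - pd m (fun y => g y j k) x)

/-- A curve is a geodesic of `g` up to reparametrisation (an unparametrized geodesic):
`γ̈ + Γ(γ̇,γ̇) = α(t)·γ̇` for some function `α`. -/
def IsPregeodesic (g : (ι → ℝ) → Matrix ι ι ℝ) (γ : ℝ → ι → ℝ) : Prop :=
  ∃ α : ℝ → ℝ, ∀ t : ℝ, ∀ i : ι,
    deriv (fun s => deriv (fun τ => γ τ i) s) t
      + ∑ j, ∑ k, christoffel g (γ t) i j k *
          deriv (fun τ => γ τ j) t * deriv (fun τ => γ τ k) t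
      = α t * deriv (fun τ => γ τ i) t

/-- `g` is a pseudo-Riemannian metric (in local coordinates) on the set `U`. -/
structure IsMetricOn (g : (ι → ℝ) → Matrix ι ι ℝ) (U : Set (ι → ℝ)) : Prop where
  smooth : ∀ i j, ContDiffOn ℝ (⊤ : ℕ∞) (fun x => g x i j) U
  symm : ∀ x ∈ U, (g x)ᵀ = g x
  nondeg : ∀ x ∈ U, IsUnit (g x).det

/-- Two metrics are geodesically equivalent on `U`: they have the same geodesics
considered as unparametrized curves. -/
def GeodEquiv (g gb : (ι → ℝ) → Matrix ι ι ℝ) (U : Set (ι → ℝ)) : Prop :=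
  ∀ γ : ℝ → ι → ℝ, ContDiff ℝ (⊤ : ℕ∞) γ → (∀ t, γ t ∈ U) →
    (IsPregeodesic g γ ↔ IsPregeodesic gb γ)

/-- The (1,1)-tensor `L(g,ḡ)^i_j = (det ḡ / det g)^{1/(n+1)} ḡ^{ik} g_{kj}`. -/
def Lten (g gb : (ι → ℝ) → Matrix ι ι ℝ) (x : ι → ℝ) : Matrix ι ι ℝ :=
  (((gb x).det / (g x).det) ^ ((1 : ℝ) / (Fintype.card ι + 1))) • ((gb x)⁻¹ * g x)

/-- An admissible factorisation `χ = χ₁·χ₂` of the characteristic polynomial of `L`: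
both factors are monic of degree ≥ 1, have smooth coefficients, and have no common
complex root at any point of `U`. -/
structure AdmissibleFact (L : (ι → ℝ) → Matrix ι ι ℝ) (U : Set (ι → ℝ))
    (chi1 chi2 : (ι → ℝ) → Polynomial ℝ) : Prop where
  factor : ∀ x ∈ U, (L x).charpoly = chi1 x * chi2 x
  monic1 : ∀ x ∈ U, (chi1 x).Monic
  monic2 : ∀ x ∈ U, (chi2 x).Monic
  deg1 : ∀ x ∈ U, 1 ≤ (chi1 x).natDegree
  deg2 : ∀ x ∈ U, 1 ≤ (chi2 x).natDegree
  smooth1 : ∀ k, ContDiffOn ℝ (⊤ : ℕ∞) (fun x => (chi1 x).coeff k) U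
  smooth2 : ∀ k, ContDiffOn ℝ (⊤ : ℕ∞) (fun x => (chi2 x).coeff k) U
  coprime : ∀ x ∈ U, ¬ ∃ z : ℂ, aeval z (chi1 x) = 0 ∧ aeval z (chi2 x) = 0

/-- The distribution `D = ker χ(L)`. -/
def Dker (L : (ι → ℝ) → Matrix ι ι ℝ) (chi : (ι → ℝ) → Polynomial ℝ) (x : ι → ℝ) :
    Submodule ℝ (ι → ℝ) :=
  LinearMap.ker (Matrix.mulVecLin (aeval (L x) (chi x)))

/-- A distribution on `U` is integrable (involutive, which is equivalent by the
Frobenius theorem): the Lie bracket of any two smooth vector fields tangent to the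
distribution is again tangent to it. -/
def IsIntegrableDist (U : Set (ι → ℝ)) (D : (ι → ℝ) → Submodule ℝ (ι → ℝ)) : Prop :=
  ∀ u v : (ι → ℝ) → ι → ℝ, ContDiffOn ℝ (⊤ : ℕ∞) u U → ContDiffOn ℝ (⊤ : ℕ∞) v U →
    (∀ x ∈ U, u x ∈ D x) → (∀ x ∈ U, v x ∈ D x) →
    ∀ x ∈ U, (fderiv ℝ v x (u x) - fderiv ℝ u x (v x)) ∈ D x

/-- The span of the first `r` coordinate vector fields (`∂_{x^1},…,∂_{x^r}`). -/
def coordSpan (n r : ℕ) : Submodule ℝ (Fin n → ℝ) :=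
  Submodule.span ℝ {e : Fin n → ℝ | ∃ i : Fin n, (i : ℕ) < r ∧ e = Pi.single i 1}

/-- The span of the last `n - r` coordinate vector fields (`∂_{y^{r+1}},…,∂_{y^n}`). -/
def coordSpan' (n r : ℕ) : Submodule ℝ (Fin n → ℝ) :=
  Submodule.span ℝ {e : Fin n → ℝ | ∃ i : Fin n, r ≤ (i : ℕ) ∧ e = Pi.single i 1}

/-!
Geodesic equivalence says that `Γ̄ - Γ` sends `(v, v)` to a multiple of `v`, so by polarisation it
is `(u, v) ↦ φ(u) v + φ(v) u` for a covector `φ`. Since the derivatives of `g` and `ḡ` are given by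
`Γ` and `Γ̄`, this makes the covariant derivative `∇_u L` equal to `u ⊗ λ + μ ⊗ g u` for a covector
`λ` and a vector `μ`; the exponent `1/(n+1)` is what cancels the term proportional to `L`. As `Γ` is
symmetric and `L` is `g`-symmetric, the Nijenhuis torsion of `L` vanishes. For `u ∈ D₂`, `v ∈ D₁` in
adapted coordinates the equation `N_L(u, v) = 0` splits into a `D₁`- and a `D₂`-component, and the
former says that `u ↦ (∂_u L) v` intertwines `L|_{D₂}` with `L|_{D₁}`. Hence `χ₂(L)` kills
`(∂_u L) v ∈ D₁`, which must then lie in `D₁ ∩ D₂ = 0`.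
-/

section MatrixCalculus

variable {𝕜 E : Type*} [NontriviallyNormedField 𝕜] [NormedAddCommGroup E] [NormedSpace 𝕜 E]

theorem differentiableAt_matrix {m n : Type*} [Finite m] [Finite n] {A : E → Matrix m n 𝕜} {x : E} :
    DifferentiableAt 𝕜 A x ↔ ∀ i j, DifferentiableAt 𝕜 (fun y => A y i j) x := by
  have := Fintype.ofFinite m
  have := Fintype.ofFinite n
  exact differentiableAt_pi.trans (forall_congr' fun _ => differentiableAt_pi)

theorem fderiv_matrix_apply {m n : Type*} [Finite m] [Finite n] {A : E → Matrix m n 𝕜} {x : E}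
    (hA : DifferentiableAt 𝕜 A x) (u : E) (i : m) (j : n) :
    fderiv 𝕜 A x u i j = fderiv 𝕜 (fun y => A y i j) x u := by
  have := Fintype.ofFinite m
  have := Fintype.ofFinite n
  have h := hasFDerivAt_pi'.1 (hasFDerivAt_pi'.1 hA.hasFDerivAt i) j
  exact (congrArg (· u) h.fderiv).symm

theorem fderiv_matrix_smul {m n : Type*} [Finite m] [Finite n] {s : E → 𝕜} {A : E → Matrix m n 𝕜}
    {x : E} (hs : DifferentiableAt 𝕜 s x) (hA : DifferentiableAt 𝕜 A x) (u : E) :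
    fderiv 𝕜 (fun y => s y • A y) x u = fderiv 𝕜 s x u • A x + s x • fderiv 𝕜 A x u := by
  have := Fintype.ofFinite m
  have := Fintype.ofFinite n
  have h : fderiv 𝕜 (fun y => s y • A y) x = _ :=
    fderiv_fun_smul (F := m → n → 𝕜) hs hA
  exact (congrArg (· u) h).trans (add_comm _ _)

variable {n : Type*} [Fintype n] {A B : E → Matrix n n 𝕜} {x : E}

section OperatorNorm

open scoped Matrix.Norms.Operator

theorem differentiableAt_matrix_mul (hA : DifferentiableAt 𝕜 A x) (hB : DifferentiableAt 𝕜 B x) :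
    DifferentiableAt 𝕜 (fun y => A y * B y) x := by
  classical exact hA.fun_mul hB

theorem fderiv_matrix_mul (hA : DifferentiableAt 𝕜 A x) (hB : DifferentiableAt 𝕜 B x) (u : E) :
    fderiv 𝕜 (fun y => A y * B y) x u = fderiv 𝕜 A x u * B x + A x * fderiv 𝕜 B x u := by
  classical exact (congrArg (· u) (fderiv_fun_mul' hA hB)).trans (add_comm _ _)

variable [DecidableEq n]

theorem hasFDerivAt_matrix_inv [CompleteSpace 𝕜] (hA : DifferentiableAt 𝕜 A x)
    (hu : IsUnit (A x).det) :
    HasFDerivAt (fun y => (A y)⁻¹)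
      ((-ContinuousLinearMap.mulLeftRight 𝕜 _ (A x)⁻¹ (A x)⁻¹).comp (fderiv 𝕜 A x)) x := by
  have : @CompleteSpace (Matrix n n 𝕜) PseudoMetricSpace.toUniformSpace :=
    FiniteDimensional.complete 𝕜 _
  obtain ⟨a, ha⟩ := (Matrix.isUnit_iff_isUnit_det _).2 hu
  have h := hasFDerivAt_ringInverse (𝕜 := 𝕜) a
  rw [← Ring.inverse_unit, ha] at h
  simp only [Matrix.nonsing_inv_eq_ringInverse]
  exact h.comp x hA.hasFDerivAt

theorem fderiv_matrix_inv [CompleteSpace 𝕜] (hA : DifferentiableAt 𝕜 A x)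
    (hu : IsUnit (A x).det) (u : E) :
    fderiv 𝕜 (fun y => (A y)⁻¹) x u = -((A x)⁻¹ * fderiv 𝕜 A x u * (A x)⁻¹) :=
  congrArg (· u) (hasFDerivAt_matrix_inv hA hu).fderiv

end OperatorNorm

variable [DecidableEq n]

theorem differentiableAt_matrix_det (hA : DifferentiableAt 𝕜 A x) :
    DifferentiableAt 𝕜 (fun y => (A y).det) x := by
  simp only [Matrix.det_apply']
  exact DifferentiableAt.fun_sum fun σ _ => (differentiableAt_const _).fun_mul
    (HasFDerivAt.finsetProd fun i _ =>
      (differentiableAt_matrix.1 hA (σ i) i).hasFDerivAt).differentiableAt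

theorem fderiv_matrix_det (hA : DifferentiableAt 𝕜 A x) (u : E) :
    fderiv 𝕜 (fun y => (A y).det) x u = ((A x).adjugate * fderiv 𝕜 A x u).trace := by
  let det : ContinuousMultilinearMap 𝕜 (fun _ : n => n → 𝕜) 𝕜 :=
    { (Matrix.detRowAlternating : (n → 𝕜) [⋀^n]→ₗ[𝕜] 𝕜).toMultilinearMap with
      cont := continuous_id.matrix_det }
  have hdet : HasFDerivAt (fun y => (A y).det) _ x := (det.hasFDerivAt (A x)).comp x hA.hasFDerivAt
  have hrow (i : n) : det (Function.update (A x) i (fderiv 𝕜 A x u i)) =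
      ((A x).adjugateᵀ *ᵥ fderiv 𝕜 A x u i) i := by
    rw [Matrix.adjugate_transpose, ← Matrix.cramer_eq_adjugate_mulVec,
      Matrix.cramer_transpose_apply]
    rfl
  calc fderiv 𝕜 (fun y => (A y).det) x u
    _ = ∑ i, det (Function.update (A x) i (fderiv 𝕜 A x u i)) := by
      rw [hdet.fderiv]
      exact det.linearDeriv_apply _ _
    _ = (fderiv 𝕜 A x u * (A x).adjugate).trace := by
      simp only [hrow, Matrix.trace, Matrix.diag, Matrix.mul_apply, Matrix.mulVec, dotProduct,
        Matrix.transpose_apply, mul_comm]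
    _ = ((A x).adjugate * fderiv 𝕜 A x u).trace := Matrix.trace_mul_comm _ _

variable {U : Set E} {N : WithTop ℕ∞}

theorem contDiffOn_matrix_det (hA : ∀ i j, ContDiffOn 𝕜 N (fun x => A x i j) U) :
    ContDiffOn 𝕜 N (fun x => (A x).det) U := by
  simp only [Matrix.det_apply']
  exact ContDiffOn.sum fun σ _ => contDiffOn_const.mul (contDiffOn_prod fun i _ => hA _ _)

theorem contDiffOn_matrix_inv (hA : ∀ i j, ContDiffOn 𝕜 N (fun x => A x i j) U)
    (hdet : ∀ x ∈ U, IsUnit (A x).det) (i j : n) :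
    ContDiffOn 𝕜 N (fun x => (A x)⁻¹ i j) U := by
  have hadj : ContDiffOn 𝕜 N (fun x => (A x).adjugate i j) U := by
    simp only [Matrix.adjugate_apply]
    refine contDiffOn_matrix_det fun a b => ?_
    rcases eq_or_ne a j with rfl | h
    · simpa only [Matrix.updateRow_self] using contDiffOn_const
    · simpa only [Matrix.updateRow_ne h] using hA a b
  simp only [Matrix.inv_def, Matrix.smul_apply, smul_eq_mul, Ring.inverse_eq_inv']
  exact ((contDiffOn_matrix_det hA).inv fun x hx => (hdet x hx).ne_zero).mul hadj

end MatrixCalculus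

theorem hasFDerivAt_div_rpow {E : Type*} [NormedAddCommGroup E] [NormedSpace ℝ E] {a b : E → ℝ}
    {a' b' : E →L[ℝ] ℝ} {x : E} (ha : HasFDerivAt a a' x) (hb : HasFDerivAt b b' x)
    (ha0 : a x ≠ 0) (hb0 : b x ≠ 0) (p : ℝ) :
    HasFDerivAt (fun y => (a y / b y) ^ p)
      ((p * (a x / b x) ^ p) • ((a x)⁻¹ • a' - (b x)⁻¹ • b')) x := by
  have hab : HasFDerivAt (fun y => a y / b y) ((a x / b x) • ((a x)⁻¹ • a' - (b x)⁻¹ • b')) x := by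
    simp only [div_eq_mul_inv]
    refine (ha.mul ((hasDerivAt_inv hb0).comp_hasFDerivAt x hb)).congr_fderiv ?_
    simp only [Function.comp_apply]
    match_scalars <;> field_simp
  refine (hab.rpow_const (Or.inl (div_ne_zero ha0 hb0))).congr_fderiv ?_
  rw [Real.rpow_sub_one (div_ne_zero ha0 hb0), smul_smul]
  congr 1
  field_simp

theorem exists_contDiffOn_Ioo_hasDerivAt {E : Type*} [NormedAddCommGroup E] [NormedSpace ℝ E]
    [CompleteSpace E] {f : E → E} {W : Set E} {p : E} {n : ℕ∞} (hn : 1 ≤ n) (hW : IsOpen W)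
    (hf : ContDiffOn ℝ n f W) (hp : p ∈ W) :
    ∃ β : ℝ → E, β 0 = p ∧ ∃ δ > 0, ContDiffOn ℝ n β (Set.Ioo (-δ) δ) ∧
      ∀ t ∈ Set.Ioo (-δ) δ, β t ∈ W ∧ HasDerivAt β (f (β t)) t := by
  obtain ⟨β, hβ0, ε, hε, hβ⟩ := ((hf.contDiffAt (hW.mem_nhds hp)).of_le
    (by exact_mod_cast hn)).exists_forall_mem_closedBall_exists_eq_forall_mem_Ioo_hasDerivAt₀ 0
  have hcont : ContinuousAt β 0 := (hβ 0 ⟨by linarith, by linarith⟩).continuousAt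
  have hnhds : ∀ᶠ t in nhds 0, β t ∈ W ∧ HasDerivAt β (f (β t)) t :=
    (hcont.eventually_mem (hW.mem_nhds (hβ0 ▸ hp))).and
      (eventually_of_mem (Ioo_mem_nhds (by linarith) (by linarith)) hβ)
  obtain ⟨δ, hδ, hball⟩ := Metric.nhds_basis_closedBall.eventually_iff.1 hnhds
  simp only [Real.closedBall_eq_Icc, zero_sub, zero_add] at hball
  refine ⟨β, hβ0, δ, hδ, ?_, fun t ht => hball (Set.Ioo_subset_Icc_self ht)⟩
  have hfst : ContDiffOn ℝ n (Function.uncurry fun _ : ℝ => f) (Set.Icc (-δ) δ ×ˢ W) :=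
    hf.comp contDiffOn_snd fun q hq => hq.2
  exact (ODE.contDiffOn_enat_Icc_of_hasDerivWithinAt hfst
    (fun t ht => (hball ht).2.hasDerivWithinAt) fun t ht => (hball ht).1).mono
    Set.Ioo_subset_Icc_self

theorem exists_contDiff_mem_Ioo_deriv_ne_zero {δ : ℝ} (hδ : 0 < δ) :
    ∃ σ : ℝ → ℝ, ContDiff ℝ (⊤ : ℕ∞) σ ∧ σ 0 = 0 ∧ (∀ t, σ t ∈ Set.Ioo (-δ) δ) ∧
      ∀ t, deriv σ t ≠ 0 := by
  refine ⟨fun t => δ / 2 * Real.arctan t, contDiff_const.mul Real.contDiff_arctan, by simp,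
    fun t => ?_, fun t => ?_⟩
  · have := Real.arctan_lt_pi_div_two t
    have := Real.neg_pi_div_two_lt_arctan t
    have := Real.pi_lt_four
    constructor <;> nlinarith
  · rw [((Real.hasDerivAt_arctan t).const_mul (δ / 2)).deriv]
    positivity

section CoordinateSubspaces

theorem single_one_mem_spanSubset {R η : Type*} [Semiring R] [Finite η] [DecidableEq η]
    {s : Set η} {i : η} (hi : i ∈ s) : Pi.single i 1 ∈ Pi.spanSubset R s :=
  Pi.mem_spanSubset_iff.2 fun _ hj => Pi.single_eq_of_ne (ne_of_mem_of_not_mem hi hj).symm 1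

theorem disjoint_spanSubset {R η : Type*} [Semiring R] [Finite η] {s t : Set η}
    (hst : Disjoint s t) : Disjoint (Pi.spanSubset R s) (Pi.spanSubset R t) := by
  refine Submodule.disjoint_def.2 fun v hs ht => _root_.funext fun i => ?_
  by_cases hi : i ∈ s
  · exact Pi.mem_spanSubset_iff.1 ht i (Set.disjoint_left.1 hst hi)
  · exact Pi.mem_spanSubset_iff.1 hs i hi

theorem forall_mulVec_mem_spanSubset_iff {R η : Type*} [Semiring R] [Fintype η] {A : Matrix η η R}
    {s : Set η} :
    (∀ v ∈ Pi.spanSubset R s, A *ᵥ v ∈ Pi.spanSubset R s) ↔ ∀ i ∉ s, ∀ j ∈ s, A i j = 0 := by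
  classical
  simp only [Pi.mem_spanSubset_iff]
  refine ⟨fun h i hi j hj => ?_, fun h v hv i hi => Finset.sum_eq_zero fun j _ => ?_⟩
  · simpa using h _ (Pi.mem_spanSubset_iff.1 (single_one_mem_spanSubset hj)) i hi
  · by_cases hj : j ∈ s
    · simp [h i hi j hj]
    · simp [hv j hj]

theorem fderiv_mulVec_mem_spanSubset {𝕜 E η : Type*} [NontriviallyNormedField 𝕜]
    [NormedAddCommGroup E] [NormedSpace 𝕜 E] [Fintype η] {A : E → Matrix η η 𝕜}
    {s : Set η} {x : E} (hA : DifferentiableAt 𝕜 A x)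
    (hs : ∀ᶠ y in nhds x, ∀ v ∈ Pi.spanSubset 𝕜 s, A y *ᵥ v ∈ Pi.spanSubset 𝕜 s) (u : E) :
    ∀ v ∈ Pi.spanSubset 𝕜 s, fderiv 𝕜 A x u *ᵥ v ∈ Pi.spanSubset 𝕜 s := by
  refine forall_mulVec_mem_spanSubset_iff.2 fun i hi j hj => ?_
  have hzero : (fun y => A y i j) =ᶠ[nhds x] fun _ => 0 :=
    hs.mono fun y hy => forall_mulVec_mem_spanSubset_iff.1 hy i hi j hj
  rw [fderiv_matrix_apply hA, hzero.fderiv_eq, fderiv_fun_const, Pi.zero_apply, _root_.zero_apply]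

end CoordinateSubspaces

section NijenhuisTorsion

variable {R V : Type*} [CommRing R] [AddCommGroup V] [Module R V]

/-- The value at a point of the Nijenhuis torsion
`N_L(u, v) = [Lu, Lv] - L[Lu, v] - L[u, Lv] + L²[u, v]` of a field of operators. It is determined by
the value `L` of the field and its derivative `D` (with `D u = ∂_u L`) at that point: evaluate the
brackets on constant vector fields. -/
def nijenhuisTorsion (L : Module.End R V) (D : V →ₗ[R] Module.End R V) (u v : V) : V :=
  D (L u) v - D (L v) u - L (D u v - D v u)

variable {L : Module.End R V} {D : V →ₗ[R] Module.End R V}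

theorem nijenhuisTorsion_eq_zero_of_compatible {Γ : V →ₗ[R] Module.End R V}
    (hΓ : ∀ u v, Γ u v = Γ v u) {B : V → V → R} (hB : ∀ u v, B u v = B v u)
    (hLB : ∀ u v, B (L u) v = B (L v) u) {lam : V → R} {mu : V}
    (hD : ∀ u v, D u v = L (Γ u v) - Γ u (L v) + lam v • u + B u v • mu) (u v : V) :
    nijenhuisTorsion L D u v = 0 := by
  simp only [nijenhuisTorsion, hD, map_sub, map_add, map_smul]
  rw [hΓ (L u) (L v), hΓ (L u) v, hΓ (L v) u, hΓ u v, hB u v, hLB u v]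
  abel

theorem apply_mem_ker_aeval (q : R[X]) {v : V} (hv : v ∈ LinearMap.ker (aeval L q)) :
    L v ∈ LinearMap.ker (aeval L q) := by
  have hcomm : aeval L q * L = L * aeval L q := by
    simpa only [map_mul, aeval_X] using congrArg (aeval L) (mul_comm q X)
  rw [LinearMap.mem_ker] at hv ⊢
  rw [← Module.End.mul_apply, hcomm, Module.End.mul_apply, hv, map_zero]

theorem map_aeval_apply_of_intertwines {W : Type*} [AddCommGroup W] [Module R W] {f : V →ₗ[R] W}
    {M : Module.End R W} {S : Submodule R V} (hS : ∀ w ∈ S, L w ∈ S)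
    (hf : ∀ w ∈ S, f (L w) = M (f w)) (q : R[X]) {w : V} (hw : w ∈ S) :
    f (aeval L q w) = aeval M q (f w) := by
  induction q using Polynomial.induction_on generalizing w with
  | C a => simp
  | add p q hp hq => simp [hp hw, hq hw]
  | monomial k a ih =>
    simpa only [pow_succ, ← mul_assoc, map_mul, aeval_X, Module.End.mul_apply, hf w hw]
      using ih (hS w hw)

theorem apply_eq_zero_of_nijenhuisTorsion_eq_zero {V₁ V₂ : Submodule R V} {q : R[X]}
    (hdisj : Disjoint V₁ V₂) (hV₂ : V₂ = LinearMap.ker (aeval L q)) (hL : ∀ v ∈ V₁, L v ∈ V₁)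
    (hD₁ : ∀ u, ∀ v ∈ V₁, D u v ∈ V₁) (hD₂ : ∀ u, ∀ v ∈ V₂, D u v ∈ V₂)
    (hN : ∀ u v, nijenhuisTorsion L D u v = 0) {u v : V} (hu : u ∈ V₂) (hv : v ∈ V₁) :
    D u v = 0 := by
  have hL₂ (w) (hw : w ∈ V₂) : L w ∈ V₂ := by
    subst hV₂
    exact apply_mem_ker_aeval q hw
  have hcomm (w) (hw : w ∈ V₂) : D.flip v (L w) = L (D.flip v w) := by
    have hsplit : D (L w) v - L (D w v) = D (L v) w - L (D v w) := by
      rw [← sub_eq_zero, ← hN w v, nijenhuisTorsion, map_sub]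
      abel
    refine sub_eq_zero.1 (Submodule.disjoint_def.1 hdisj _ ?_ ?_)
    · exact sub_mem (hD₁ _ v hv) (hL _ (hD₁ w v hv))
    · exact hsplit ▸ sub_mem (hD₂ _ w hw) (hL₂ _ (hD₂ v w hw))
  refine Submodule.disjoint_def.1 hdisj _ (hD₁ u v hv) ?_
  have hqu : aeval L q u = 0 := by rwa [hV₂] at hu
  rw [hV₂, LinearMap.mem_ker]
  change aeval L q (D.flip v u) = 0
  rw [← map_aeval_apply_of_intertwines hL₂ hcomm q hu, hqu, map_zero]

end NijenhuisTorsion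

theorem exists_dual_of_apply_self_eq_smul {K V : Type*} [Field K] [NeZero (2 : K)]
    [AddCommGroup V] [Module K V] {T : V →ₗ[K] V →ₗ[K] V} (hsymm : ∀ v w, T v w = T w v)
    (hT : ∀ v, ∃ c : K, T v v = c • v) :
    ∃ φ : Module.Dual K V, ∀ v w, T v w = φ w • v + φ v • w := by
  choose c hc using hT
  have hpair {v w : V} (hvw : LinearIndependent K ![v, w]) :
      T v w = (c w / 2) • v + (c v / 2) • w := by
    have hadd := hc (v + w)
    have hsub := hc (v - w)
    simp only [map_add, map_sub, LinearMap.add_apply, LinearMap.sub_apply, hsymm w v, hc v, hc w]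
      at hadd hsub
    -- The sum of `hadd` and `hsub` compares coefficients, their difference is `4 • T v w`.
    obtain ⟨hv, hw⟩ := LinearIndependent.pair_iff.1 hvw
      (2 * c v - (c (v + w) + c (v - w))) (2 * c w - (c (v + w) - c (v - w)))
      (by linear_combination (norm := module) hadd + hsub)
    have hfour : (4 : K) • T v w = (2 * c w) • v + (2 * c v) • w := by
      rw [sub_eq_zero.1 hv, sub_eq_zero.1 hw]
      linear_combination (norm := module) hadd - hsub
    have h2 : (2 : K) ≠ 0 := two_ne_zero
    have h4 : (4 : K) ≠ 0 := by convert mul_ne_zero h2 h2; norm_num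
    rw [← smul_right_inj h4, hfour, smul_add, smul_smul, smul_smul]
    congr 2 <;> field_simp <;> ring
  let b := Module.Basis.ofVectorSpace K V
  let φ : Module.Dual K V := b.constr K fun i => c (b i) / 2
  suffices T = (LinearMap.lsmul K V).flip.compl₂ φ + LinearMap.lsmul K V ∘ₗ φ from
    ⟨φ, fun v w => by simp [this]⟩
  refine b.ext fun i => b.ext fun j => ?_
  rcases eq_or_ne i j with rfl | hij
  · simp [φ, hc, ← add_smul]
  · have hb : LinearIndependent K ![b i, b j] := by
      convert b.linearIndependent.comp ![i, j] (injective_pair_iff_ne.2 hij)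
      ext k
      fin_cases k <;> rfl
    simpa [φ] using hpair hb

/-- The Levi-Civita connection form of `g` at `x`: the matrix `Γ(u)^i_l = Γ^i_{kl} u^k`, so that
`∇_u v = ∂_u v + Γ(u) v`. -/
def connectionForm (g : (ι → ℝ) → Matrix ι ι ℝ) (x : ι → ℝ) : (ι → ℝ) →ₗ[ℝ] Matrix ι ι ℝ :=
  Fintype.linearCombination ℝ fun k => Matrix.of fun i l => christoffel g x i k l

section Connection

variable {U : Set (ι → ℝ)} {g : (ι → ℝ) → Matrix ι ι ℝ} {x : ι → ℝ}

theorem connectionForm_single (g : (ι → ℝ) → Matrix ι ι ℝ) (x : ι → ℝ) (k : ι) :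
    connectionForm g x (Pi.single k 1) = Matrix.of fun i l => christoffel g x i k l := by
  simp [connectionForm, Fintype.linearCombination_apply_single]

theorem connectionForm_mulVec_apply (g : (ι → ℝ) → Matrix ι ι ℝ) (x u v : ι → ℝ) (i : ι) :
    (connectionForm g x u *ᵥ v) i = ∑ k, ∑ l, christoffel g x i k l * u k * v l := by
  rw [connectionForm, Fintype.linearCombination_apply, Matrix.sum_mulVec, Finset.sum_apply]
  refine Finset.sum_congr rfl fun k _ => ?_
  rw [Matrix.smul_mulVec, Pi.smul_apply, smul_eq_mul, Matrix.mulVec, dotProduct, Finset.mul_sum]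
  exact Finset.sum_congr rfl fun l _ => by rw [Matrix.of_apply]; ring

theorem IsMetricOn.differentiableAt (hg : IsMetricOn g U) (hU : IsOpen U) (hx : x ∈ U) :
    DifferentiableAt ℝ g x :=
  differentiableAt_matrix.2 fun i j =>
    ((hg.smooth i j).contDiffAt (hU.mem_nhds hx)).differentiableAt (by simp)

theorem IsMetricOn.pd_apply (hg : IsMetricOn g U) (hU : IsOpen U) (hx : x ∈ U) (k i j : ι) :
    pd k (fun y => g y i j) x = fderiv ℝ g x (Pi.single k 1) i j :=
  (fderiv_matrix_apply (hg.differentiableAt hU hx) _ i j).symm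

theorem IsMetricOn.transpose_fderiv (hg : IsMetricOn g U) (hU : IsOpen U) (hx : x ∈ U)
    (u : ι → ℝ) : (fderiv ℝ g x u)ᵀ = fderiv ℝ g x u := by
  ext i j
  have hsymm : (fun y => g y j i) =ᶠ[nhds x] fun y => g y i j :=
    eventually_of_mem (hU.mem_nhds hx) fun y hy => congrFun₂ (hg.symm y hy) i j
  rw [Matrix.transpose_apply, fderiv_matrix_apply (hg.differentiableAt hU hx),
    fderiv_matrix_apply (hg.differentiableAt hU hx), hsymm.fderiv_eq]

theorem IsMetricOn.connectionForm_mulVec_comm (hg : IsMetricOn g U) (hU : IsOpen U) (hx : x ∈ U)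
    (u v : ι → ℝ) : connectionForm g x u *ᵥ v = connectionForm g x v *ᵥ u := by
  have hsymm (i k l : ι) : christoffel g x i k l = christoffel g x i l k := by
    simp only [christoffel, hg.pd_apply hU hx]
    congr! 2 with m
    rw [← congrFun₂ (hg.transpose_fderiv hU hx _) l k, Matrix.transpose_apply]
    ring
  ext i
  rw [connectionForm_mulVec_apply, connectionForm_mulVec_apply, Finset.sum_comm]
  refine Finset.sum_congr rfl fun l _ => Finset.sum_congr rfl fun k _ => ?_
  rw [hsymm]
  ring

theorem IsMetricOn.mul_connectionForm_single_apply (hg : IsMetricOn g U) (hU : IsOpen U)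
    (hx : x ∈ U) (k m l : ι) :
    (g x * connectionForm g x (Pi.single k 1)) m l =
      (fderiv ℝ g x (Pi.single k 1) m l + fderiv ℝ g x (Pi.single l 1) m k
        - fderiv ℝ g x (Pi.single m 1) k l) / 2 := by
  let C : Matrix ι ι ℝ := Matrix.of fun m l => fderiv ℝ g x (Pi.single k 1) m l
    + fderiv ℝ g x (Pi.single l 1) m k - fderiv ℝ g x (Pi.single m 1) k l
  have hΓ : connectionForm g x (Pi.single k 1) = (1 / 2 : ℝ) • ((g x)⁻¹ * C) := by
    ext i l
    simp [connectionForm_single, christoffel, hg.pd_apply hU hx, C, Matrix.mul_apply]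
  rw [hΓ, Matrix.mul_smul, Matrix.mul_nonsing_inv_cancel_left _ _ (hg.nondeg x hx)]
  simp only [C, Matrix.smul_apply, Matrix.of_apply, smul_eq_mul]
  ring

theorem IsMetricOn.fderiv_eq (hg : IsMetricOn g U) (hU : IsOpen U) (hx : x ∈ U) (u : ι → ℝ) :
    fderiv ℝ g x u = (connectionForm g x u)ᵀ * g x + g x * connectionForm g x u := by
  let f : (ι → ℝ) →ₗ[ℝ] Matrix ι ι ℝ := LinearMap.mulLeft ℝ (g x) ∘ₗ connectionForm g x
  suffices (fderiv ℝ g x : (ι → ℝ) →ₗ[ℝ] Matrix ι ι ℝ) =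
      (Matrix.transposeLinearEquiv ι ι ℝ ℝ).toLinearMap ∘ₗ f + f by
    simpa [f, Matrix.transpose_mul, hg.symm x hx] using LinearMap.congr_fun this u
  refine LinearMap.pi_ext' fun k => LinearMap.ext_ring ?_
  have hsymm (k i j : ι) :
      fderiv ℝ g x (Pi.single k 1) i j = fderiv ℝ g x (Pi.single k 1) j i :=
    congrFun₂ (hg.transpose_fderiv hU hx _) j i
  ext m l
  change fderiv ℝ g x (Pi.single k 1) m l = f (Pi.single k 1) l m + f (Pi.single k 1) m l
  simp only [f, LinearMap.comp_apply, LinearMap.mulLeft_apply,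
    hg.mul_connectionForm_single_apply hU hx]
  rw [hsymm k l m, hsymm m l k, hsymm l m k]
  ring

theorem IsMetricOn.fderiv_det (hg : IsMetricOn g U) (hU : IsOpen U) (hx : x ∈ U) (u : ι → ℝ) :
    fderiv ℝ (fun y => (g y).det) x u = 2 * (g x).det * (connectionForm g x u).trace := by
  rw [fderiv_matrix_det (hg.differentiableAt hU hx), hg.fderiv_eq hU hx, Matrix.mul_add,
    Matrix.trace_add, ← Matrix.mul_assoc, ← Matrix.mul_assoc, Matrix.adjugate_mul,
    Matrix.trace_mul_cycle, Matrix.mul_adjugate]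
  simp only [smul_mul_assoc, one_mul, Matrix.trace_smul, Matrix.trace_transpose, smul_eq_mul]
  ring

end Connection

/-- The geodesic spray of `g`, as a vector field on the space of pairs (point, velocity). -/
def geodesicSpray (g : (ι → ℝ) → Matrix ι ι ℝ) (p : (ι → ℝ) × (ι → ℝ)) : (ι → ℝ) × (ι → ℝ) :=
  (p.2, -(connectionForm g p.1 p.2 *ᵥ p.2))

section Geodesics

variable {U : Set (ι → ℝ)} {g gb : (ι → ℝ) → Matrix ι ι ℝ} {x : ι → ℝ}

theorem isPregeodesic_iff {γ : ℝ → ι → ℝ} (hγ : ContDiff ℝ 2 γ) :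
    IsPregeodesic g γ ↔ ∃ α : ℝ → ℝ, ∀ t,
      deriv (deriv γ) t + connectionForm g (γ t) (deriv γ t) *ᵥ deriv γ t = α t • deriv γ t := by
  have hdiff : Differentiable ℝ γ := hγ.differentiable (by simp)
  have hdiff' : Differentiable ℝ (deriv γ) := hγ.differentiable_deriv_two
  have hderiv (t i) : deriv (fun τ => γ τ i) t = deriv γ t i :=
    (congrFun (deriv_pi fun i => differentiableAt_pi.1 (hdiff t) i) i).symm
  have hderiv' (t i) : deriv (fun τ => deriv γ τ i) t = deriv (deriv γ) t i :=
    (congrFun (deriv_pi fun i => differentiableAt_pi.1 (hdiff' t) i) i).symm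
  simp only [IsPregeodesic, hderiv, hderiv', funext_iff, Pi.add_apply, Pi.smul_apply,
    connectionForm_mulVec_apply, smul_eq_mul]

theorem IsMetricOn.contDiffOn_christoffel (hg : IsMetricOn g U) (hU : IsOpen U) (i j k : ι) :
    ContDiffOn ℝ (⊤ : ℕ∞) (fun x => christoffel g x i j k) U := by
  have hpd (m a b : ι) : ContDiffOn ℝ (⊤ : ℕ∞) (pd m fun y => g y a b) U :=
    ((hg.smooth a b).fderiv_of_isOpen hU (by simp)).clm_apply contDiffOn_const
  exact contDiffOn_const.mul <| ContDiffOn.sum fun m _ =>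
    (contDiffOn_matrix_inv hg.smooth hg.nondeg i m).mul <|
      ((hpd j m k).add (hpd k m j)).sub (hpd m j k)

theorem IsMetricOn.contDiffOn_geodesicSpray (hg : IsMetricOn g U) (hU : IsOpen U) :
    ContDiffOn ℝ (⊤ : ℕ∞) (geodesicSpray g) (U ×ˢ Set.univ) := by
  refine contDiffOn_snd.prodMk (ContDiffOn.neg (contDiffOn_pi.2 fun i => ?_))
  simp only [connectionForm_mulVec_apply]
  refine ContDiffOn.sum fun j _ => ContDiffOn.sum fun k _ =>
    ContDiffOn.mul (ContDiffOn.mul ?_ ?_) ?_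
  · exact (hg.contDiffOn_christoffel hU i j k).comp contDiffOn_fst fun p hp => hp.1
  · exact contDiffOn_pi.1 contDiffOn_snd j
  · exact contDiffOn_pi.1 contDiffOn_snd k

theorem isPregeodesic_comp_of_hasDerivAt_geodesicSpray {β : ℝ → (ι → ℝ) × (ι → ℝ)} {σ : ℝ → ℝ}
    (hσ : ContDiff ℝ 2 σ) (hσ' : ∀ t, deriv σ t ≠ 0)
    (hcont : ContDiff ℝ 2 fun t => (β (σ t)).1)
    (hβ : ∀ t, HasDerivAt β (geodesicSpray g (β (σ t))) (σ t)) :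
    IsPregeodesic g fun t => (β (σ t)).1 := by
  have hcomp (t) : HasDerivAt (β ∘ σ) (deriv σ t • geodesicSpray g (β (σ t))) t :=
    (hβ t).scomp t (hσ.differentiable (by simp) t).hasDerivAt
  have hγ (t) : HasDerivAt (fun t => (β (σ t)).1) (deriv σ t • (β (σ t)).2) t :=
    (ContinuousLinearMap.fst ℝ (ι → ℝ) (ι → ℝ)).hasFDerivAt.comp_hasDerivAt t (hcomp t)
  have hv (t) : HasDerivAt (fun t => (β (σ t)).2)
      (deriv σ t • -(connectionForm g (β (σ t)).1 (β (σ t)).2 *ᵥ (β (σ t)).2)) t :=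
    (ContinuousLinearMap.snd ℝ (ι → ℝ) (ι → ℝ)).hasFDerivAt.comp_hasDerivAt t (hcomp t)
  have hγ' : deriv (fun t => (β (σ t)).1) = fun t => deriv σ t • (β (σ t)).2 :=
    _root_.funext fun t => (hγ t).deriv
  refine (isPregeodesic_iff hcont).2 ⟨fun t => deriv (deriv σ) t / deriv σ t, fun t => ?_⟩
  have h0 := hσ' t
  rw [hγ', ((hσ.differentiable_deriv_two t).hasDerivAt.fun_smul (hv t)).deriv]
  simp only [map_smul, Matrix.smul_mulVec, Matrix.mulVec_smul, smul_smul, div_mul_cancel₀ _ h0,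
    smul_neg]
  abel

theorem IsMetricOn.exists_isPregeodesic (hg : IsMetricOn g U) (hU : IsOpen U) (hx : x ∈ U)
    (v : ι → ℝ) :
    ∃ γ : ℝ → ι → ℝ, ContDiff ℝ (⊤ : ℕ∞) γ ∧ (∀ t, γ t ∈ U) ∧ IsPregeodesic g γ ∧ γ 0 = x ∧
      ∃ c : ℝ, c ≠ 0 ∧ deriv γ 0 = c • v := by
  obtain ⟨β, hβ0, δ, hδ, hsmooth, hβ⟩ := exists_contDiffOn_Ioo_hasDerivAt le_top
    (hU.prod isOpen_univ) (hg.contDiffOn_geodesicSpray hU) (p := (x, v)) ⟨hx, trivial⟩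
  obtain ⟨σ, hσ, hσ0, hσI, hσ'⟩ := exists_contDiff_mem_Ioo_deriv_ne_zero hδ
  have hγ : ContDiff ℝ (⊤ : ℕ∞) fun t => (β (σ t)).1 :=
    contDiff_fst.comp (hsmooth.comp_contDiff hσ hσI)
  refine ⟨fun t => (β (σ t)).1, hγ, fun t => (hβ _ (hσI t)).1.1,
    isPregeodesic_comp_of_hasDerivAt_geodesicSpray (contDiff_infty.1 hσ 2) hσ'
      (contDiff_infty.1 hγ 2) fun t => (hβ _ (hσI t)).2,
    by simp only [hσ0, hβ0], deriv σ 0, hσ' 0, ?_⟩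
  have h := hasFDerivAt_fst.comp_hasDerivAt 0
    ((hβ _ (hσI 0)).2.scomp 0 (hσ.differentiable (by simp) 0).hasDerivAt)
  refine h.deriv.trans ?_
  simp [hσ0, hβ0, geodesicSpray]

theorem GeodEquiv.exists_connectionForm_sub_mulVec_self (hU : IsOpen U) (hg : IsMetricOn g U)
    (hge : GeodEquiv g gb U) (hx : x ∈ U) (v : ι → ℝ) :
    ∃ l : ℝ, connectionForm gb x v *ᵥ v - connectionForm g x v *ᵥ v = l • v := by
  obtain ⟨γ, hγ, hγU, hpre, rfl, c, hc, hcv⟩ := hg.exists_isPregeodesic hU hx v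
  have hγ2 : ContDiff ℝ 2 γ := contDiff_infty.1 hγ 2
  obtain ⟨a, ha⟩ := (isPregeodesic_iff hγ2).1 hpre
  obtain ⟨b, hb⟩ := (isPregeodesic_iff hγ2).1 ((hge γ hγ hγU).1 hpre)
  have hsub := congrArg₂ (· - ·) (hb 0) (ha 0)
  simp only [hcv, map_smul, Matrix.smul_mulVec, Matrix.mulVec_smul, add_sub_add_left_eq_sub]
    at hsub
  refine ⟨(b 0 - a 0) / c, ?_⟩
  rw [← smul_right_inj (pow_ne_zero 2 hc)]
  linear_combination (norm := skip) hsub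
  match_scalars <;> field_simp <;> ring

end Geodesics

section Compatibility

variable {U : Set (ι → ℝ)} {g gb : (ι → ℝ) → Matrix ι ι ℝ} {x : ι → ℝ}

theorem GeodEquiv.exists_connectionForm_eq (hU : IsOpen U) (hg : IsMetricOn g U)
    (hgb : IsMetricOn gb U) (hge : GeodEquiv g gb U) (hx : x ∈ U) :
    ∃ φ : ι → ℝ, ∀ u,
      connectionForm gb x u = connectionForm g x u + vecMulVec u φ + (φ ⬝ᵥ u) • 1 := by
  let T : (ι → ℝ) →ₗ[ℝ] (ι → ℝ) →ₗ[ℝ] (ι → ℝ) :=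
    Matrix.toLin'.toLinearMap ∘ₗ (connectionForm gb x - connectionForm g x)
  have hT (u v : ι → ℝ) : T u v = connectionForm gb x u *ᵥ v - connectionForm g x u *ᵥ v := by
    simp [T]
  obtain ⟨φ, hφ⟩ := exists_dual_of_apply_self_eq_smul (T := T)
    (fun u v => by
      rw [hT, hT, hg.connectionForm_mulVec_comm hU hx, hgb.connectionForm_mulVec_comm hU hx])
    fun v => by simpa only [hT] using hge.exists_connectionForm_sub_mulVec_self hU hg hx v
  obtain ⟨φ, rfl⟩ := (dotProductEquiv ℝ ι).surjective φ
  refine ⟨φ, fun u => Matrix.ext_of_mulVec_single fun j => ?_⟩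
  have h := hφ u (Pi.single j 1)
  rw [hT, sub_eq_iff_eq_add'] at h
  simp only [h, Matrix.add_mulVec, Matrix.smul_mulVec, Matrix.vecMulVec_mulVec, Matrix.one_mulVec,
    dotProductEquiv_apply_apply, op_smul_eq_smul, add_assoc]

theorem IsMetricOn.hasFDerivAt_det_div_rpow (hg : IsMetricOn g U) (hgb : IsMetricOn gb U)
    (hU : IsOpen U) (hx : x ∈ U) (p : ℝ) :
    HasFDerivAt (fun y => ((gb y).det / (g y).det) ^ p)
      ((p * ((gb x).det / (g x).det) ^ p) • ((gb x).det⁻¹ • fderiv ℝ (fun y => (gb y).det) x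
        - (g x).det⁻¹ • fderiv ℝ (fun y => (g y).det) x)) x :=
  hasFDerivAt_div_rpow (differentiableAt_matrix_det (hgb.differentiableAt hU hx)).hasFDerivAt
    (differentiableAt_matrix_det (hg.differentiableAt hU hx)).hasFDerivAt
    (hgb.nondeg x hx).ne_zero (hg.nondeg x hx).ne_zero p

theorem IsMetricOn.fderiv_det_div_rpow (hg : IsMetricOn g U) (hgb : IsMetricOn gb U)
    (hU : IsOpen U) (hx : x ∈ U) (p : ℝ) (u : ι → ℝ) :
    fderiv ℝ (fun y => ((gb y).det / (g y).det) ^ p) x u =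
      2 * p * ((connectionForm gb x u).trace - (connectionForm g x u).trace) *
        ((gb x).det / (g x).det) ^ p := by
  have h0 := (hg.nondeg x hx).ne_zero
  have h0' := (hgb.nondeg x hx).ne_zero
  rw [(hg.hasFDerivAt_det_div_rpow hgb hU hx p).fderiv]
  simp only [_root_.smul_apply, _root_.sub_apply, smul_eq_mul, hg.fderiv_det hU hx,
    hgb.fderiv_det hU hx]
  field_simp

theorem IsMetricOn.fderiv_inv_mul (hg : IsMetricOn g U) (hgb : IsMetricOn gb U)
    (hU : IsOpen U) (hx : x ∈ U) (u : ι → ℝ) :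
    fderiv ℝ (fun y => (gb y)⁻¹ * g y) x u =
      (gb x)⁻¹ * g x * connectionForm g x u - connectionForm gb x u * ((gb x)⁻¹ * g x)
        - (gb x)⁻¹ * (connectionForm gb x u - connectionForm g x u)ᵀ * g x := by
  have hd := hg.differentiableAt hU hx
  have hdb := hgb.differentiableAt hU hx
  rw [fderiv_matrix_mul (hasFDerivAt_matrix_inv hdb (hgb.nondeg x hx)).differentiableAt hd,
    fderiv_matrix_inv hdb (hgb.nondeg x hx), hg.fderiv_eq hU hx, hgb.fderiv_eq hU hx]
  simp only [mul_add, add_mul, Matrix.transpose_sub, mul_sub, sub_mul, ← mul_assoc,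
    Matrix.nonsing_inv_mul _ (hgb.nondeg x hx), one_mul, neg_mul,
    Matrix.mul_nonsing_inv_cancel_right _ _ (hgb.nondeg x hx)]
  simp only [mul_assoc]
  abel

theorem IsMetricOn.differentiableAt_inv_mul (hg : IsMetricOn g U) (hgb : IsMetricOn gb U)
    (hU : IsOpen U) (hx : x ∈ U) : DifferentiableAt ℝ (fun y => (gb y)⁻¹ * g y) x :=
  differentiableAt_matrix_mul
    (hasFDerivAt_matrix_inv (hgb.differentiableAt hU hx) (hgb.nondeg x hx)).differentiableAt
    (hg.differentiableAt hU hx)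

theorem IsMetricOn.mul_Lten_symm (hg : IsMetricOn g U) (hgb : IsMetricOn gb U) (hx : x ∈ U) :
    (g x * Lten g gb x)ᵀ = g x * Lten g gb x := by
  simp [Lten, Matrix.transpose_mul, Matrix.transpose_nonsing_inv, hg.symm x hx, hgb.symm x hx,
    Matrix.mul_assoc]

theorem IsMetricOn.differentiableAt_Lten (hg : IsMetricOn g U) (hgb : IsMetricOn gb U)
    (hU : IsOpen U) (hx : x ∈ U) : DifferentiableAt ℝ (Lten g gb) x :=
  differentiableAt_matrix.2 fun i j =>
    (hg.hasFDerivAt_det_div_rpow hgb hU hx _).differentiableAt.fun_mul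
      (differentiableAt_matrix.1 (hg.differentiableAt_inv_mul hgb hU hx) i j)

theorem IsMetricOn.fderiv_inv_mul_of_connectionForm_eq (hg : IsMetricOn g U)
    (hgb : IsMetricOn gb U) (hU : IsOpen U) (hx : x ∈ U) {φ u : ι → ℝ}
    (hφ : connectionForm gb x u = connectionForm g x u + vecMulVec u φ + (φ ⬝ᵥ u) • 1) :
    fderiv ℝ (fun y => (gb y)⁻¹ * g y) x u =
      (gb x)⁻¹ * g x * connectionForm g x u - connectionForm g x u * ((gb x)⁻¹ * g x)
        - vecMulVec u (φ ᵥ* ((gb x)⁻¹ * g x)) - vecMulVec ((gb x)⁻¹ *ᵥ φ) (g x *ᵥ u)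
        - (2 * (φ ⬝ᵥ u)) • ((gb x)⁻¹ * g x) := by
  have hgu : u ᵥ* g x = g x *ᵥ u := by rw [← Matrix.mulVec_transpose, hg.symm x hx]
  rw [hg.fderiv_inv_mul hgb hU hx, hφ]
  simp only [add_assoc, add_sub_cancel_left, Matrix.transpose_add, Matrix.transpose_vecMulVec,
    Matrix.transpose_smul, Matrix.transpose_one, add_mul, mul_add, Matrix.vecMulVec_mul,
    Matrix.mul_vecMulVec, hgu, smul_mul_assoc, mul_smul_comm, one_mul, mul_one]
  module

theorem GeodEquiv.exists_fderiv_Lten_eq (hU : IsOpen U) (hg : IsMetricOn g U)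
    (hgb : IsMetricOn gb U) (hge : GeodEquiv g gb U) (hx : x ∈ U) :
    ∃ lam mu : ι → ℝ, ∀ u, fderiv ℝ (Lten g gb) x u =
      Lten g gb x * connectionForm g x u - connectionForm g x u * Lten g gb x
        + vecMulVec u lam + vecMulVec mu (g x *ᵥ u) := by
  obtain ⟨φ, hφ⟩ := hge.exists_connectionForm_eq hU hg hgb hx
  let s (y : ι → ℝ) : ℝ := ((gb y).det / (g y).det) ^ ((1 : ℝ) / (Fintype.card ι + 1))
  refine ⟨-(φ ᵥ* Lten g gb x), -(s x • (gb x)⁻¹ *ᵥ φ), fun u => ?_⟩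
  have htrace : (connectionForm gb x u).trace - (connectionForm g x u).trace
      = (Fintype.card ι + 1) * (φ ⬝ᵥ u) := by
    simp only [hφ, Matrix.trace_add, Matrix.trace_vecMulVec, Matrix.trace_smul, Matrix.trace_one,
      smul_eq_mul, dotProduct_comm u φ]
    ring
  have hs : fderiv ℝ s x u = 2 * (φ ⬝ᵥ u) * s x := by
    simp only [s, hg.fderiv_det_div_rpow hgb hU hx, htrace]
    field_simp
  have hL : Lten g gb x = s x • ((gb x)⁻¹ * g x) := rfl
  refine (fderiv_matrix_smul (hg.hasFDerivAt_det_div_rpow hgb hU hx _).differentiableAt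
    (hg.differentiableAt_inv_mul hgb hU hx) u).trans ?_
  rw [hs, hg.fderiv_inv_mul_of_connectionForm_eq hgb hU hx (hφ u), hL]
  simp only [Matrix.vecMul_smul, Matrix.vecMulVec_neg, Matrix.neg_vecMulVec,
    Matrix.vecMulVec_smul, Matrix.smul_vecMulVec, smul_mul_assoc, mul_smul_comm]
  module

theorem GeodEquiv.nijenhuisTorsion_Lten (hU : IsOpen U) (hg : IsMetricOn g U)
    (hgb : IsMetricOn gb U) (hge : GeodEquiv g gb U) (hx : x ∈ U) (u v : ι → ℝ) :
    nijenhuisTorsion (Matrix.toLin' (Lten g gb x))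
      (Matrix.toLin'.toLinearMap ∘ₗ (fderiv ℝ (Lten g gb) x : (ι → ℝ) →ₗ[ℝ] Matrix ι ι ℝ)) u v
        = 0 := by
  obtain ⟨lam, mu, hD⟩ := hge.exists_fderiv_Lten_eq hU hg hgb hx
  refine nijenhuisTorsion_eq_zero_of_compatible
    (Γ := Matrix.toLin'.toLinearMap ∘ₗ connectionForm g x)
    (hg.connectionForm_mulVec_comm hU hx) (B := fun u v => g x *ᵥ u ⬝ᵥ v)
    (fun u v => ?_) (fun u v => ?_) (lam := (lam ⬝ᵥ ·)) (mu := mu) (fun u v => ?_) u v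
  · rw [dotProduct_comm, dotProduct_mulVec, ← Matrix.mulVec_transpose, hg.symm x hx]
  · simp only [Matrix.toLin'_apply, Matrix.mulVec_mulVec]
    rw [dotProduct_comm, dotProduct_mulVec, ← Matrix.mulVec_transpose, hg.mul_Lten_symm hgb hx]
  · simp [hD, Matrix.vecMulVec_mulVec]

end Compatibility

section Splitting

theorem Dker_eq_ker_aeval (L : (ι → ℝ) → Matrix ι ι ℝ) (chi : (ι → ℝ) → ℝ[X]) (x : ι → ℝ) :
    Dker L chi x = LinearMap.ker (aeval (Matrix.toLin' (L x)) (chi x)) :=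
  congrArg LinearMap.ker (aeval_algHom_apply Matrix.toLinAlgEquiv' (L x) (chi x)).symm

theorem mulVec_mem_Dker {L : (ι → ℝ) → Matrix ι ι ℝ} {chi : (ι → ℝ) → ℝ[X]} {x v : ι → ℝ}
    (hv : v ∈ Dker L chi x) : L x *ᵥ v ∈ Dker L chi x := by
  rw [Dker_eq_ker_aeval] at hv ⊢
  exact apply_mem_ker_aeval (chi x) hv

theorem coordSpan_eq_spanSubset (n r : ℕ) :
    coordSpan n r = Pi.spanSubset ℝ {i : Fin n | (i : ℕ) < r} := by
  simp [coordSpan, Pi.spanSubset, Set.image, eq_comm]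

theorem coordSpan'_eq_spanSubset (n r : ℕ) :
    coordSpan' n r = Pi.spanSubset ℝ {i : Fin n | (i : ℕ) < r}ᶜ := by
  simp [coordSpan', Pi.spanSubset, Set.image, eq_comm]

variable {U : Set (ι → ℝ)} {g gb : (ι → ℝ) → Matrix ι ι ℝ} {chi1 chi2 : (ι → ℝ) → ℝ[X]}
  {s t : Set ι}

theorem GeodEquiv.fderiv_Lten_mulVec_eq_zero (hU : IsOpen U) (hg : IsMetricOn g U)
    (hgb : IsMetricOn gb U) (hge : GeodEquiv g gb U) (hst : Disjoint s t)
    (hs : ∀ x ∈ U, Dker (Lten g gb) chi1 x = Pi.spanSubset ℝ s)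
    (ht : ∀ x ∈ U, Dker (Lten g gb) chi2 x = Pi.spanSubset ℝ t) {x u v : ι → ℝ} (hx : x ∈ U)
    (hu : u ∈ Pi.spanSubset ℝ t) (hv : v ∈ Pi.spanSubset ℝ s) :
    fderiv ℝ (Lten g gb) x u *ᵥ v = 0 := by
  have hinv {chi : (ι → ℝ) → ℝ[X]} {s : Set ι}
      (hs : ∀ x ∈ U, Dker (Lten g gb) chi x = Pi.spanSubset ℝ s) (y) (hy : y ∈ U) :
      ∀ v ∈ Pi.spanSubset ℝ s, Lten g gb y *ᵥ v ∈ Pi.spanSubset ℝ s :=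
    hs y hy ▸ fun _ => mulVec_mem_Dker
  have hfderiv {chi : (ι → ℝ) → ℝ[X]} {s : Set ι}
      (hs : ∀ x ∈ U, Dker (Lten g gb) chi x = Pi.spanSubset ℝ s) (w : ι → ℝ) :
      ∀ v ∈ Pi.spanSubset ℝ s, fderiv ℝ (Lten g gb) x w *ᵥ v ∈ Pi.spanSubset ℝ s :=
    fderiv_mulVec_mem_spanSubset (hg.differentiableAt_Lten hgb hU hx)
      (eventually_of_mem (hU.mem_nhds hx) (hinv hs)) w
  exact apply_eq_zero_of_nijenhuisTorsion_eq_zero (disjoint_spanSubset hst)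
    ((ht x hx).symm.trans (Dker_eq_ker_aeval _ _ x)) (hinv hs x hx) (hfderiv hs) (hfderiv ht)
    (hge.nijenhuisTorsion_Lten hU hg hgb hx) hu hv

theorem GeodEquiv.pd_Lten_eq_zero (hU : IsOpen U) (hg : IsMetricOn g U) (hgb : IsMetricOn gb U)
    (hge : GeodEquiv g gb U) (hst : Disjoint s t)
    (hs : ∀ x ∈ U, Dker (Lten g gb) chi1 x = Pi.spanSubset ℝ s)
    (ht : ∀ x ∈ U, Dker (Lten g gb) chi2 x = Pi.spanSubset ℝ t) {x : ι → ℝ} (hx : x ∈ U)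
    (i : ι) {j m : ι} (hj : j ∈ s) (hm : m ∈ t) : pd m (fun y => Lten g gb y i j) x = 0 := by
  have h := hge.fderiv_Lten_mulVec_eq_zero hU hg hgb hst hs ht hx
    (single_one_mem_spanSubset hm) (single_one_mem_spanSubset hj)
  rw [Matrix.mulVec_single_one] at h
  rw [pd, ← fderiv_matrix_apply (hg.differentiableAt_Lten hgb hU hx)]
  exact congrFun h i

theorem Dker_apply_eq_zero {L : (ι → ℝ) → Matrix ι ι ℝ} {chi : (ι → ℝ) → ℝ[X]} {x : ι → ℝ}
    (hs : Dker L chi x = Pi.spanSubset ℝ s) {i j : ι} (hi : i ∉ s) (hj : j ∈ s) : L x i j = 0 :=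
  forall_mulVec_mem_spanSubset_iff.1 (hs ▸ fun _ => mulVec_mem_Dker) i hi j hj

end Splitting

theorem stmt1_general {s : Set ι} (U : Set (ι → ℝ)) (hU : IsOpen U)
    (g gb : (ι → ℝ) → Matrix ι ι ℝ) (hg : IsMetricOn g U) (hgb : IsMetricOn gb U)
    (hge : GeodEquiv g gb U) (chi1 chi2 : (ι → ℝ) → ℝ[X])
    (hD1 : ∀ x ∈ U, Dker (Lten g gb) chi1 x = Pi.spanSubset ℝ s)
    (hD2 : ∀ x ∈ U, Dker (Lten g gb) chi2 x = Pi.spanSubset ℝ sᶜ) :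
    ∀ x ∈ U,
      (∀ i j, (i ∈ s ∧ j ∉ s) ∨ (i ∉ s ∧ j ∈ s) → Lten g gb x i j = 0) ∧
      (∀ i j, i ∈ s → j ∈ s → ∀ m ∉ s, pd m (fun y => Lten g gb y i j) x = 0) ∧
      (∀ i j, i ∉ s → j ∉ s → ∀ m ∈ s, pd m (fun y => Lten g gb y i j) x = 0) := by
  refine fun x hx => ⟨?_, fun i j _ hj m hm => ?_, fun i j _ hj m hm => ?_⟩
  · rintro i j (⟨hi, hj⟩ | ⟨hi, hj⟩)
    · exact Dker_apply_eq_zero (hD2 x hx) (not_not.2 hi) hj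
    · exact Dker_apply_eq_zero (hD1 x hx) hi hj
  · exact hge.pd_Lten_eq_zero hU hg hgb disjoint_compl_right hD1 hD2 hx i hj hm
  · exact hge.pd_Lten_eq_zero hU hg hgb disjoint_compl_left hD2 hD1 hx i hj hm

theorem stmt1 {n r : ℕ} (hr : r ≤ n) (U : Set (Fin n → ℝ)) (hU : IsOpen U)
    (g gb : (Fin n → ℝ) → Matrix (Fin n) (Fin n) ℝ)
    (hg : IsMetricOn g U) (hgb : IsMetricOn gb U)
    (hge : GeodEquiv g gb U)
    (chi1 chi2 : (Fin n → ℝ) → Polynomial ℝ)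
    (hfac : AdmissibleFact (Lten g gb) U chi1 chi2)
    (hdeg : ∀ x ∈ U, (chi1 x).natDegree = r)
    -- the coordinates are adapted: `D₁ = ker χ₁(L)` is spanned by `∂_{x^1},…,∂_{x^r}`
    -- and `D₂ = ker χ₂(L)` is spanned by `∂_{y^{r+1}},…,∂_{y^n}`
    (hD1 : ∀ x ∈ U, Dker (Lten g gb) chi1 x = coordSpan n r)
    (hD2 : ∀ x ∈ U, Dker (Lten g gb) chi2 x = coordSpan' n r) :
    ∀ x ∈ U,
      -- `L` is block-diagonal
      (∀ i j : Fin n, (((i : ℕ) < r ∧ r ≤ (j : ℕ)) ∨ (r ≤ (i : ℕ) ∧ (j : ℕ) < r)) →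
        Lten g gb x i j = 0) ∧
      -- the entries of the block `L₁` do not depend on the `y`-variables
      (∀ i j : Fin n, (i : ℕ) < r → (j : ℕ) < r →
        ∀ m : Fin n, r ≤ (m : ℕ) → pd m (fun y => Lten g gb y i j) x = 0) ∧
      -- the entries of the block `L₂` do not depend on the `x`-variables
      (∀ i j : Fin n, r ≤ (i : ℕ) → r ≤ (j : ℕ) →
        ∀ m : Fin n, (m : ℕ) < r → pd m (fun y => Lten g gb y i j) x = 0) := by
  simpa only [Set.mem_ofPred_eq, not_lt] using
    stmt1_general (s := {i : Fin n | (i : ℕ) < r}) U hU g gb hg hgb hge chi1 chi2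
      (coordSpan_eq_spanSubset n r ▸ hD1) (coordSpan'_eq_spanSubset n r ▸ hD2)
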